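/- Let g : ℝ → ℝ be a lift of a piecewise linear degree-one circle homeomorphism with k ≥ 2 break points, let p, q be coprime integers with q ≥ 1, and suppose the translation number of g equals p/q. Then the q-th iterate of g equals the translation x ↦ x + p if and only if there exists a continuous strictly increasing h : ℝ → ℝ with h(x+1) = h(x) + 1 which is piecewise linear with at most ⌊qk/2⌋ break points (i.e., there exist d ≤ ⌊qk/2⌋ and points 0 ≤ u_1 < … < u_d < 1 such that h is affine on each interval [u_i, u_{i+1}], with u_{d+1} = u_1 + 1) and which satisfies h(g(x)) = h(x) + p/q for all x ∈ ℝ. -/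

import Mathlib

/-- The right endpoint of the interval of definition starting at the break point
`t_i`: the next break point, or `t_1 + 1` for the last interval. -/
noncomputable def nextPt {k : ℕ} (t : Fin k → ℝ) (i : Fin k) : ℝ :=
  if h : (i : ℕ) + 1 < k then t ⟨(i : ℕ) + 1, h⟩ else t ⟨0, i.pos⟩ + 1

theorem aux_int (g : ℝ → ℝ) (hdeg : ∀ x, g (x + 1) = g x + 1) (n : ℤ) (x : ℝ) :
    g (x + n) = g x + n := by
  induction n using Int.induction_on with
  | zero => simp
  | succ m ih =>
    have := hdeg (x + (m : ℤ))
    push_cast at *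
    rw [← add_assoc, this, ih]; ring
  | pred m ih =>
    have := hdeg (x + ((-(m:ℤ) - 1 : ℤ) : ℝ))
    have e : x + ((-(m:ℤ) - 1 : ℤ) : ℝ) + 1 = x + ((-(m:ℤ) : ℤ) : ℝ) := by push_cast; ring
    rw [e, ih] at this
    push_cast at *
    linarith

theorem aux_iter_int (g : ℝ → ℝ) (hdeg : ∀ x, g (x + 1) = g x + 1) (j : ℕ) (n : ℤ) (x : ℝ) :
    g^[j] (x + n) = g^[j] x + n := by
  induction j generalizing x with
  | zero => simp
  | succ m ih => rw [Function.iterate_succ_apply, Function.iterate_succ_apply, aux_int g hdeg, ih]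

theorem aux_loc (k : ℕ) (hk : 2 ≤ k) (t : Fin k → ℝ)
    (hk0 : 0 < k) (ht0 : t ⟨0, hk0⟩ = 0) (x : ℝ) :
    ∃ (i : Fin k) (n : ℤ), t i + n ≤ x ∧ x < nextPt t i + n := by
  classical
  have hf0 := Int.fract_nonneg x
  have hf1 := Int.fract_lt_one x
  have hfx := Int.floor_add_fract x
  obtain ⟨i, hi, hmax⟩ := (Finset.univ.filter (fun i : Fin k => t i ≤ Int.fract x)).exists_max_image
    id ⟨⟨0, hk0⟩, by simp [ht0]⟩
  simp only [Finset.mem_filter, Finset.mem_univ, true_and, id] at hi hmax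
  refine ⟨i, ⌊x⌋, by linarith, ?_⟩
  have : Int.fract x < nextPt t i := by
    unfold nextPt
    split_ifs with h
    · by_contra hc
      have := hmax ⟨i + 1, h⟩ (not_lt.mp hc)
      simp [Fin.le_def] at this
    · rw [ht0]; linarith
  linarith

theorem aux_deriv_right (g : ℝ → ℝ) (a b c s x : ℝ) (h : ∀ y ∈ Set.Icc a b, g y = c + s * y)
    (h1 : a ≤ x) (h2 : x < b) : HasDerivWithinAt g s (Set.Ici x) x := by
  have h0 : HasDerivWithinAt (fun y => c + s * y) s (Set.Ici x) x := by
    simpa using (((hasDerivAt_id x).const_mul s).const_add c).hasDerivWithinAt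
  refine h0.congr_of_eventuallyEq ?_ (h x ⟨h1, h2.le⟩)
  filter_upwards [Icc_mem_nhdsGE h2] with y hy
  exact h y ⟨h1.trans hy.1, hy.2⟩

theorem aux_deriv_left (g : ℝ → ℝ) (a b c s x : ℝ) (h : ∀ y ∈ Set.Icc a b, g y = c + s * y)
    (h1 : a < x) (h2 : x ≤ b) : HasDerivWithinAt g s (Set.Iic x) x := by
  have h0 : HasDerivWithinAt (fun y => c + s * y) s (Set.Iic x) x := by
    simpa using (((hasDerivAt_id x).const_mul s).const_add c).hasDerivWithinAt
  refine h0.congr_of_eventuallyEq ?_ (h x ⟨h1.le, h2⟩)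
  filter_upwards [Icc_mem_nhdsLE h1] with y hy
  exact h y ⟨hy.1, hy.2.trans h2⟩

theorem aux_aff (k : ℕ) (g : ℝ → ℝ) (hdeg : ∀ x, g (x + 1) = g x + 1)
    (t s : Fin k → ℝ)
    (haff : ∀ i : Fin k, ∀ x ∈ Set.Icc (t i) (nextPt t i),
      g x = g (t i) + s i * (x - t i)) (i : Fin k) (n : ℤ) :
    ∀ y ∈ Set.Icc (t i + n) (nextPt t i + n),
      g y = (g (t i) + n - s i * (t i + n)) + s i * y := by
  intro y hy
  have h1 := haff i (y - n) ⟨by linarith [hy.1], by linarith [hy.2]⟩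
  have h2 := aux_int g hdeg n (y - n)
  rw [sub_add_cancel] at h2
  rw [h2, h1]; ring

/-- one-sided derivatives, depending only on the class mod 1 -/
theorem aux_slopes (k : ℕ) (hk : 2 ≤ k) (g : ℝ → ℝ) (hdeg : ∀ x, g (x + 1) = g x + 1)
    (t s : Fin k → ℝ)
    (hk0 : 0 < k) (ht0 : t ⟨0, hk0⟩ = 0) (htmono : StrictMono t) (ht1 : ∀ i, t i < 1)
    (hs : ∀ i, 0 < s i)
    (hsne : ∀ i : Fin k, s i ≠ s ⟨((i : ℕ) + 1) % k, Nat.mod_lt _ i.pos⟩)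
    (haff : ∀ i : Fin k, ∀ x ∈ Set.Icc (t i) (nextPt t i),
      g x = g (t i) + s i * (x - t i)) (y : ℝ) :
    ∃ r l : ℝ, 0 < r ∧ 0 < l ∧
      (∀ n : ℤ, HasDerivWithinAt g r (Set.Ici (y + n)) (y + n)) ∧
      (∀ n : ℤ, HasDerivWithinAt g l (Set.Iic (y + n)) (y + n)) ∧
      ((∃ i, t i = y) → r ≠ l) ∧ (r ≠ l → ∃ (i : Fin k) (n : ℤ), y = t i + n) := by
  have A := aux_aff k g hdeg t s haff
  obtain ⟨i, n, h1, h2⟩ := aux_loc k hk t hk0 ht0 y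
  have hR : ∀ m : ℤ, HasDerivWithinAt g (s i) (Set.Ici (y + m)) (y + m) := fun m =>
    aux_deriv_right g _ _ _ _ _ (A i (n + m)) (by push_cast; linarith) (by push_cast; linarith)
  have hnn : ∀ i, 0 ≤ t i := fun i => by
    rw [← ht0]; exact htmono.monotone (by simp [Fin.le_def])
  rcases h1.lt_or_eq with h1 | h1
  · refine ⟨s i, s i, hs i, hs i, hR, fun m => aux_deriv_left g _ _ _ _ _ (A i (n + m))
      (by push_cast; linarith) (by push_cast; linarith), ?_, fun h => absurd rfl h⟩
    rintro ⟨j, hj⟩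
    exfalso
    -- t i + n < t j < nextPt t i + n
    have hnx : nextPt t i ≤ 1 := by
      unfold nextPt; split_ifs
      · exact (ht1 _).le
      · rw [ht0]; simp
    have hn : n = 0 := by
      have a1 : (n : ℝ) < 1 := by linarith [hnn i, ht1 j]
      have a2 : (-1 : ℝ) < n := by linarith [hnn j]
      have b1 : n < 1 := by exact_mod_cast a1
      have b2 : -1 < n := by exact_mod_cast a2
      omega
    subst hn
    rw [← hj] at h1 h2
    simp only [Int.cast_zero, add_zero] at h1 h2
    have hij := htmono.lt_iff_lt.mp h1
    unfold nextPt at h2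
    split_ifs at h2 with h
    · have := htmono.lt_iff_lt.mp h2
      simp only [Fin.lt_def] at this hij
      omega
    · simp only [Fin.lt_def] at hij
      omega
  · -- y = t i + n
    have key : ∃ (i' : Fin k) (e : ℤ), t i = nextPt t i' + e ∧ t i' < nextPt t i' ∧ s i' ≠ s i := by
      by_cases hi : (i : ℕ) = 0
      · refine ⟨⟨k - 1, by omega⟩, -1, ?_, ?_, ?_⟩
        · have : i = ⟨0, hk0⟩ := Fin.ext hi
          rw [this, ht0]
          unfold nextPt
          rw [dif_neg (by simp; omega), ht0]; simp
        · unfold nextPt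
          rw [dif_neg (by simp; omega), ht0]; simpa using ht1 _
        · have := hsne ⟨k - 1, by omega⟩
          have e : (⟨(k - 1 + 1) % k, Nat.mod_lt _ (by omega)⟩ : Fin k) = i := by
            apply Fin.ext
            simp only [hi]
            rw [Nat.sub_add_cancel (by omega), Nat.mod_self]
          simpa only [e] using this
      · have hil := i.isLt
        have e1 : (⟨i - 1 + 1, by omega⟩ : Fin k) = i := Fin.ext (by simp; omega)
        have e2 : nextPt t ⟨i - 1, by omega⟩ = t i := by
          unfold nextPt
          rw [dif_pos (by simp; omega)]
          simp only [e1]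
        refine ⟨⟨i - 1, by omega⟩, 0, by rw [e2]; simp, ?_, ?_⟩
        · rw [e2]; apply htmono; simp [Fin.lt_def]; omega
        · have := hsne ⟨i - 1, by omega⟩
          have e : (⟨((i:ℕ) - 1 + 1) % k, Nat.mod_lt _ (by omega)⟩ : Fin k) = i := by
            apply Fin.ext
            simp only
            rw [Nat.sub_add_cancel (by omega), Nat.mod_eq_of_lt hil]
          simpa only [e] using this
    obtain ⟨i', e, k1, k2, k3⟩ := key
    refine ⟨s i, s i', hs i, hs i', hR, fun m => aux_deriv_left g _ _ _ _ _ (A i' (n + m + e))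
      (by push_cast; linarith) (by push_cast; linarith), fun _ => k3.symm, fun _ => ⟨i, n, h1.symm⟩⟩

theorem aux_iter_right (g : ℝ → ℝ) (hmono : StrictMono g) (R : ℝ → ℝ)
    (hR : ∀ x, HasDerivWithinAt g (R x) (Set.Ici x) x) (m : ℕ) (x : ℝ) :
    HasDerivWithinAt g^[m] (∏ j ∈ Finset.range m, R (g^[j] x)) (Set.Ici x) x := by
  induction m with
  | zero => simpa using hasDerivWithinAt_id x _
  | succ m ih =>
    rw [Function.iterate_succ', Finset.prod_range_succ, mul_comm]
    refine (hR _).comp x ih ?_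
    intro y hy
    exact (hmono.monotone.iterate m) hy

theorem aux_iter_left (g : ℝ → ℝ) (hmono : StrictMono g) (R : ℝ → ℝ)
    (hR : ∀ x, HasDerivWithinAt g (R x) (Set.Iic x) x) (m : ℕ) (x : ℝ) :
    HasDerivWithinAt g^[m] (∏ j ∈ Finset.range m, R (g^[j] x)) (Set.Iic x) x := by
  induction m with
  | zero => simpa using hasDerivWithinAt_id x _
  | succ m ih =>
    rw [Function.iterate_succ', Finset.prod_range_succ, mul_comm]
    refine (hR _).comp x ih ?_
    intro y hy
    exact (hmono.monotone.iterate m) hy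

/-- each orbit of a break point contains a second break point -/
theorem aux_second (k : ℕ) (hk : 2 ≤ k) (g : ℝ → ℝ)
    (hmono : StrictMono g) (hdeg : ∀ x, g (x + 1) = g x + 1)
    (t s : Fin k → ℝ)
    (hk0 : 0 < k) (ht0 : t ⟨0, hk0⟩ = 0) (htmono : StrictMono t) (ht1 : ∀ i, t i < 1)
    (hs : ∀ i, 0 < s i)
    (hsne : ∀ i : Fin k, s i ≠ s ⟨((i : ℕ) + 1) % k, Nat.mod_lt _ i.pos⟩)
    (haff : ∀ i : Fin k, ∀ x ∈ Set.Icc (t i) (nextPt t i),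
      g x = g (t i) + s i * (x - t i))
    (p : ℤ) (q : ℕ) (hq : 1 ≤ q) (hg : g^[q] = fun x => x + (p : ℝ)) (i : Fin k) :
    ∃ (i' : Fin k) (j : ℕ) (n : ℤ), i' ≠ i ∧ j < q ∧ g^[j] (t i) = t i' + n := by
  have hnn : ∀ i, 0 ≤ t i := fun i => by
    rw [← ht0]; exact htmono.monotone (by simp [Fin.le_def])
  have S := aux_slopes k hk g hdeg t s hk0 ht0 htmono ht1 hs hsne haff
  choose r l hr hl hR hL hne hT using S
  by_contra! hcon
  have fr : ∀ x : ℝ, Int.fract x + (⌊x⌋ : ℤ) = x := fun x => Int.fract_add_floor x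
  have HR := aux_iter_right g hmono (fun x => r (Int.fract x)) (fun x => by
    have := hR (Int.fract x) ⌊x⌋
    rwa [fr] at this) q (t i)
  have HL := aux_iter_left g hmono (fun x => l (Int.fract x)) (fun x => by
    have := hL (Int.fract x) ⌊x⌋
    rwa [fr] at this) q (t i)
  have hd : HasDerivAt g^[q] 1 (t i) := by
    rw [hg]; exact (hasDerivAt_id _).add_const _
  have eR := (uniqueDiffWithinAt_Ici (t i)).eq_deriv _ HR hd.hasDerivWithinAt
  have eL := (uniqueDiffWithinAt_Iic (t i)).eq_deriv _ HL hd.hasDerivWithinAt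
  have fti : Int.fract (t i) = t i := Int.fract_eq_self.mpr ⟨hnn i, ht1 i⟩
  have hi := hne (t i) ⟨i, rfl⟩
  have hj : ∀ j < q, r (Int.fract (g^[j] (t i))) ≠ l (Int.fract (g^[j] (t i))) →
      Int.fract (g^[j] (t i)) = t i := by
    intro j hj h
    obtain ⟨i', n, e⟩ := hT _ h
    by_cases h' : i' = i
    · subst h'
      rw [← Int.fract_fract (g^[j] (t i')), e, Int.fract_add_intCast, fti]
    · exact absurd (by have := fr (g^[j] (t i)); push_cast; linarith)
        (hcon i' j (n + ⌊g^[j] (t i)⌋) h' hj)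
  rcases lt_or_gt_of_ne hi with hlt | hlt
  · have := Finset.prod_lt_prod (s := Finset.range q)
      (f := fun j => r (Int.fract (g^[j] (t i)))) (g := fun j => l (Int.fract (g^[j] (t i))))
      (fun j _ => hr _) (fun j hjq => by
        by_cases hh : r (Int.fract (g^[j] (t i))) = l (Int.fract (g^[j] (t i)))
        · exact hh.le
        · rw [hj j (Finset.mem_range.mp hjq) hh]; exact hlt.le)
      ⟨0, Finset.mem_range.mpr hq, by simpa [fti] using hlt⟩
    linarith
  · have := Finset.prod_lt_prod (s := Finset.range q)
      (f := fun j => l (Int.fract (g^[j] (t i)))) (g := fun j => r (Int.fract (g^[j] (t i))))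
      (fun j _ => hl _) (fun j hjq => by
        by_cases hh : r (Int.fract (g^[j] (t i))) = l (Int.fract (g^[j] (t i)))
        · exact hh.ge
        · rw [hj j (Finset.mem_range.mp hjq) hh]; exact hlt.le)
      ⟨0, Finset.mem_range.mpr hq, by simpa [fti] using hlt⟩
    linarith

theorem aux_mod (g : ℝ → ℝ) (hdeg : ∀ x, g (x + 1) = g x + 1) (p : ℤ) (q : ℕ)
    (hg : g^[q] = fun x => x + (p : ℝ)) (j : ℕ) (x : ℝ) :
    ∃ n : ℤ, g^[j] x = g^[j % q] x + n := by
  have h : ∀ m : ℕ, ∀ x, ∃ n : ℤ, g^[q * m] x = x + n := by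
    intro m
    induction m with
    | zero => intro x; exact ⟨0, by simp⟩
    | succ m ih =>
      intro x
      obtain ⟨n, hn⟩ := ih (x + p)
      refine ⟨p + n, ?_⟩
      rw [Nat.mul_succ, Function.iterate_add_apply, hg]
      simp only
      rw [hn]; push_cast; ring
  obtain ⟨n, hn⟩ := h (j / q) x
  refine ⟨n, ?_⟩
  conv_lhs => rw [← Nat.mod_add_div j q]
  rw [Function.iterate_add_apply, hn, aux_iter_int g hdeg]

theorem aux_card (k : ℕ) (g : ℝ → ℝ) (hdeg : ∀ x, g (x + 1) = g x + 1)
    (t : Fin k → ℝ) (p : ℤ) (q : ℕ) (hq : 1 ≤ q) (hg : g^[q] = fun x => x + (p : ℝ))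
    (H : ∀ i : Fin k, ∃ (i' : Fin k) (j : ℕ) (n : ℤ), i' ≠ i ∧ j < q ∧ g^[j] (t i) = t i' + n) :
    ((Finset.univ ×ˢ Finset.range q : Finset (Fin k × ℕ)).image
      (fun z => Int.fract (g^[z.2] (t z.1)))).card ≤ q * k / 2 := by
  rw [Nat.le_div_iff_mul_le (by norm_num)]
  have hc : (Finset.univ ×ˢ Finset.range q : Finset (Fin k × ℕ)).card = q * k := by
    simp [mul_comm]
  rw [← hc, mul_comm]
  refine Finset.mul_card_image_le_card _ _ ?_
  intro u hu
  obtain ⟨⟨i, j⟩, hz, rfl⟩ := Finset.mem_image.mp hu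
  have hjq : j < q := by simpa using hz
  obtain ⟨i', m, n, h1, h2, h3⟩ := H i
  rw [Nat.succ_le_iff, Finset.one_lt_card]
  refine ⟨(i, j), by simp [hjq], (i', (j + q - m) % q), ?_, ?_⟩
  · simp only [Finset.mem_filter, Finset.mem_product, Finset.mem_univ, Finset.mem_range, true_and]
    refine ⟨Nat.mod_lt _ (by omega), ?_⟩
    obtain ⟨a, ha⟩ := aux_mod g hdeg p q hg (j + q - m) (t i')
    have e : g^[j + q - m] (g^[m] (t i)) = g^[j] (t i) + p := by
      rw [← Function.iterate_add_apply, Nat.sub_add_cancel (by omega),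
        Function.iterate_add_apply, hg]
      simp only
      rw [aux_iter_int g hdeg]
    rw [h3, aux_iter_int g hdeg, ha] at e
    have e' : g^[(j + q - m) % q] (t i') = g^[j] (t i) + ((p - n - a : ℤ) : ℝ) := by
      push_cast; linarith
    rw [e', Int.fract_add_intCast]
  · intro h
    exact h1 (Prod.ext_iff.mp h).1.symm

/-- the forward direction -/
theorem aux_fwd (k : ℕ) (hk : 2 ≤ k) (g : ℝ → ℝ) (hcont : Continuous g)
    (hmono : StrictMono g) (hdeg : ∀ x, g (x + 1) = g x + 1)
    (t s : Fin k → ℝ)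
    (hk0 : 0 < k) (ht0 : t ⟨0, hk0⟩ = 0) (htmono : StrictMono t) (ht1 : ∀ i, t i < 1)
    (hs : ∀ i, 0 < s i)
    (hsne : ∀ i : Fin k, s i ≠ s ⟨((i : ℕ) + 1) % k, Nat.mod_lt _ i.pos⟩)
    (haff : ∀ i : Fin k, ∀ x ∈ Set.Icc (t i) (nextPt t i),
      g x = g (t i) + s i * (x - t i))
    (p : ℤ) (q : ℕ) (hq : 1 ≤ q) (hg : g^[q] = fun x => x + (p : ℝ)) :
    ∃ h : ℝ → ℝ, Continuous h ∧ StrictMono h ∧ (∀ x, h (x + 1) = h x + 1) ∧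
      (∃ d : ℕ, 1 ≤ d ∧ d ≤ q * k / 2 ∧ ∃ u : Fin d → ℝ,
        StrictMono u ∧ (∀ i, u i ∈ Set.Ico (0 : ℝ) 1) ∧
        ∀ i : Fin d, ∃ α β : ℝ,
          ∀ x ∈ Set.Icc (u i) (nextPt u i), h x = α * x + β) ∧
      (∀ x, h (g x) = h x + (p : ℝ) / q) := by
  have hq0 : (0 : ℝ) < q := by exact_mod_cast hq
  set U := (Finset.univ ×ˢ Finset.range q : Finset (Fin k × ℕ)).image
      (fun z => Int.fract (g^[z.2] (t z.1))) with hU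
  have hUcard : U.card ≤ q * k / 2 := aux_card k g hdeg t p q hq hg
    (aux_second k hk g hmono hdeg t s hk0 ht0 htmono ht1 hs hsne haff p q hq hg)
  have U01 : ∀ x ∈ U, x ∈ Set.Ico (0 : ℝ) 1 := by
    intro x hx
    obtain ⟨z, _, rfl⟩ := Finset.mem_image.mp hx
    exact ⟨Int.fract_nonneg _, Int.fract_lt_one _⟩
  -- periodic set
  let P : ℝ → Prop := fun x => ∃ (i : Fin k) (j : ℕ) (n : ℤ), x = g^[j] (t i) + n
  have PU : ∀ x, P x → Int.fract x ∈ U := by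
    rintro x ⟨i, j, n, rfl⟩
    obtain ⟨a, ha⟩ := aux_mod g hdeg p q hg j (t i)
    rw [Int.fract_add_intCast, ha, Int.fract_add_intCast]
    exact Finset.mem_image.mpr ⟨(i, j % q), by simp [Nat.mod_lt _ hq], rfl⟩
  have Pg : ∀ x, P x → P (g x) := by
    rintro x ⟨i, j, n, rfl⟩
    exact ⟨i, j + 1, n, by rw [aux_int g hdeg, Function.iterate_succ_apply']⟩
  have Pgj : ∀ j x, P x → P (g^[j] x) := by
    intro j
    induction j with
    | zero => intro x hx; exact hx
    | succ j ih => intro x hx; rw [Function.iterate_succ_apply']; exact Pg _ (ih x hx)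
  have Pg' : ∀ x, P (g x) → P x := by
    intro x hx
    obtain ⟨i, j, n, e⟩ := Pgj (q - 1) _ hx
    rw [← Function.iterate_succ_apply, Nat.succ_eq_add_one, Nat.sub_add_cancel hq, hg] at e
    exact ⟨i, j, n - p, by push_cast; simp only at e; linarith⟩
  have Pt : ∀ (i : Fin k) (n : ℤ), P (t i + n) := fun i n => ⟨i, 0, n, rfl⟩
  have Pnext : ∀ (i : Fin k) (n : ℤ), P (nextPt t i + n) := by
    intro i n
    unfold nextPt
    split_ifs with h
    · exact Pt _ _
    · have := Pt ⟨0, i.pos⟩ (1 + n)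
      push_cast at this
      rwa [← add_assoc] at this
  -- g affine on gaps
  have gap : ∀ a b : ℝ, a < b → (∀ x, a < x → x < b → ¬ P x) →
      ∃ α β : ℝ, ∀ x ∈ Set.Icc a b, g x = α * x + β := by
    intro a b hab hP
    obtain ⟨i, n, h1, h2⟩ := aux_loc k hk t hk0 ht0 a
    have h3 : b ≤ nextPt t i + n := by
      by_contra hc
      exact hP _ h2 (not_le.mp hc) (Pnext i n)
    refine ⟨s i, g (t i) + n - s i * (t i + n), fun x hx => ?_⟩
    rw [aux_aff k g hdeg t s haff i n x ⟨h1.trans hx.1, hx.2.trans h3⟩]; ring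
  have gapj : ∀ (j : ℕ) (a b : ℝ), a < b → (∀ x, a < x → x < b → ¬ P x) →
      ∃ α β : ℝ, ∀ x ∈ Set.Icc a b, g^[j] x = α * x + β := by
    intro j
    induction j with
    | zero => intro a b _ _; exact ⟨1, 0, by simp⟩
    | succ j ih =>
      intro a b hab hP
      obtain ⟨α, β, h1⟩ := gap a b hab hP
      obtain ⟨α', β', h2⟩ := ih (g a) (g b) (hmono hab) (by
        intro z hz1 hz2 hPz
        obtain ⟨y, _, rfl⟩ := intermediate_value_Icc hab.le hcont.continuousOn ⟨hz1.le, hz2.le⟩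
        exact hP y (hmono.lt_iff_lt.mp hz1) (hmono.lt_iff_lt.mp hz2) (Pg' _ hPz))
      refine ⟨α' * α, α' * β + β', fun x hx => ?_⟩
      rw [Function.iterate_succ_apply,
        h2 _ ⟨hmono.monotone hx.1, hmono.monotone hx.2⟩, h1 x hx]; ring
  refine ⟨fun x => (∑ j ∈ Finset.range q, (g^[j] x - j * ((p : ℝ) / q))) / q, ?_, ?_, ?_, ?_, ?_⟩
  · refine Continuous.div_const (continuous_finsetSum _ fun j _ => ?_) _
    exact (hcont.iterate j).sub continuous_const
  · intro x y hxy
    refine div_lt_div_of_pos_right (Finset.sum_lt_sum_of_nonempty ⟨0, Finset.mem_range.mpr hq⟩ ?_) hq0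
    intro j _
    have := hmono.iterate j hxy
    linarith
  · intro x
    have : ∀ j, g^[j] (x + 1) = g^[j] x + 1 := fun j => by
      simpa using aux_iter_int g hdeg j 1 x
    simp only [this]
    rw [div_add_one hq0.ne']
    congr 1
    simp only [Finset.sum_sub_distrib, Finset.sum_add_distrib]
    simp; ring
  · have t0U : (0 : ℝ) ∈ U := by
      refine Finset.mem_image.mpr ⟨(⟨0, hk0⟩, 0), by simp; omega, by simp [ht0]⟩
    refine ⟨U.card, Finset.card_pos.mpr ⟨_, t0U⟩, hUcard, ⇑(U.orderEmbOfFin rfl),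
      (U.orderEmbOfFin rfl).strictMono, fun i => U01 _ (U.orderEmbOfFin_mem rfl i), ?_⟩
    intro i
    set u : Fin U.card → ℝ := ⇑(U.orderEmbOfFin rfl) with hu
    have umono : StrictMono u := (U.orderEmbOfFin rfl).strictMono
    have u01 : ∀ i, u i ∈ Set.Ico (0 : ℝ) 1 := fun i => U01 _ (U.orderEmbOfFin_mem rfl i)
    have usurj : ∀ x ∈ U, ∃ m, u m = x := by
      intro x hx
      have := Finset.range_orderEmbOfFin U rfl
      have hx' : x ∈ (U : Set ℝ) := hx
      rw [← this] at hx'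
      exact hx'
    have hlt : u i < nextPt u i := by
      unfold nextPt
      split_ifs with h
      · exact umono (by simp [Fin.lt_def])
      · linarith [(u01 i).2, (u01 ⟨0, i.pos⟩).1]
    have hgap : ∀ x, u i < x → x < nextPt u i → ¬ P x := by
      intro x hx1 hx2 hP
      obtain ⟨m, hm⟩ := usurj _ (PU x hP)
      have hx : x = u m + (⌊x⌋ : ℤ) := by rw [hm]; exact (Int.fract_add_floor x).symm
      generalize ⌊x⌋ = n at hx
      subst hx
      have hn : 0 ≤ n := by
        have : (-1 : ℝ) < n := by linarith [(u01 i).1, (u01 m).2]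
        have : -1 < n := by exact_mod_cast this
        omega
      unfold nextPt at hx2
      split_ifs at hx2 with h
      · have : (n : ℝ) < 1 := by linarith [(u01 m).1, (u01 ⟨i + 1, h⟩).2]
        have : n < 1 := by exact_mod_cast this
        obtain rfl : n = 0 := by omega
        simp only [Int.cast_zero, add_zero] at hx1 hx2
        have a1 := umono.lt_iff_lt.mp hx1
        have a2 := umono.lt_iff_lt.mp hx2
        simp only [Fin.lt_def] at a1 a2
        omega
      · have : u ⟨0, i.pos⟩ ≤ u m := umono.monotone (by simp [Fin.le_def])
        have : (n : ℝ) < 1 := by linarith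
        have : n < 1 := by exact_mod_cast this
        obtain rfl : n = 0 := by omega
        simp only [Int.cast_zero, add_zero] at hx1 hx2
        have a1 := umono.lt_iff_lt.mp hx1
        have := m.isLt
        simp only [Fin.lt_def] at a1
        omega
    choose α β hαβ using fun j => gapj j _ _ hlt hgap
    refine ⟨(∑ j ∈ Finset.range q, α j) / q,
      (∑ j ∈ Finset.range q, (β j - j * ((p : ℝ) / q))) / q, fun x hx => ?_⟩
    have : ∀ j, g^[j] x = α j * x + β j := fun j => hαβ j x hx
    simp only [this, Finset.sum_sub_distrib, Finset.sum_add_distrib]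
    rw [div_mul_eq_mul_div, Finset.sum_mul]
    ring
  · intro x
    have e1 : ∑ j ∈ Finset.range q, g^[j] (g x) = (∑ j ∈ Finset.range q, g^[j] x) + p := by
      have h1 := Finset.sum_range_succ' (fun j => g^[j] x) q
      have h2 := Finset.sum_range_succ (fun j => g^[j] x) q
      rw [hg] at h2
      simp only [Function.iterate_succ_apply, Function.iterate_zero, id] at h1
      linarith
    simp only [Finset.sum_sub_distrib]
    rw [e1]
    ring

/-- Conjugacy characterization of pinch points for PL circle homeomorphisms:
if `g` is a lift of a PL degree-one circle homeomorphism with `k ≥ 2` break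
points `0 = t_1 < ⋯ < t_k < 1`, slopes `s_i`, and translation number `p/q`
(`p, q` coprime, `q ≥ 1`), then `g^[q]` is the translation by `p` iff `g` is
conjugate to the rotation by `p/q` via a PL circle homeomorphism lift `h` with
at most `⌊qk/2⌋` break points. -/
theorem stmt16 (k : ℕ) (hk : 2 ≤ k) (g : ℝ → ℝ) (hcont : Continuous g)
    (hmono : StrictMono g) (hdeg : ∀ x, g (x + 1) = g x + 1)
    (t s : Fin k → ℝ)
    (ht0 : t ⟨0, by omega⟩ = 0) (htmono : StrictMono t) (ht1 : ∀ i, t i < 1)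
    (hs : ∀ i, 0 < s i)
    (hsne : ∀ i : Fin k, s i ≠ s ⟨((i : ℕ) + 1) % k, Nat.mod_lt _ i.pos⟩)
    (haff : ∀ i : Fin k, ∀ x ∈ Set.Icc (t i) (nextPt t i),
      g x = g (t i) + s i * (x - t i))
    (p : ℤ) (q : ℕ) (hq : 1 ≤ q) (hpq : Int.gcd p q = 1)
    (hrot : Filter.Tendsto (fun m : ℕ => g^[m] 0 / m) Filter.atTop
      (nhds ((p : ℝ) / q))) :
    (g^[q] = fun x => x + (p : ℝ)) ↔
    ∃ h : ℝ → ℝ, Continuous h ∧ StrictMono h ∧ (∀ x, h (x + 1) = h x + 1) ∧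
      (∃ d : ℕ, 1 ≤ d ∧ d ≤ q * k / 2 ∧ ∃ u : Fin d → ℝ,
        StrictMono u ∧ (∀ i, u i ∈ Set.Ico (0 : ℝ) 1) ∧
        ∀ i : Fin d, ∃ α β : ℝ,
          ∀ x ∈ Set.Icc (u i) (nextPt u i), h x = α * x + β) ∧
      (∀ x, h (g x) = h x + (p : ℝ) / q) := by
  constructor
  · exact aux_fwd k hk g hcont hmono hdeg t s (by omega) ht0 htmono ht1 hs hsne haff p q hq
  · rintro ⟨h, _, hm, h1, _, hc⟩
    have hit : ∀ (m : ℕ) (x : ℝ), h (g^[m] x) = h x + m * ((p : ℝ) / q) := by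
      intro m
      induction m with
      | zero => simp
      | succ m ih =>
        intro x
        rw [Function.iterate_succ_apply, ih, hc]; push_cast; ring
    have hq0 : (q : ℝ) ≠ 0 := by
      have : q ≠ 0 := by omega
      exact_mod_cast this
    funext x
    apply hm.injective
    rw [hit, aux_int h h1, mul_div_cancel₀ _ hq0]
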